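/- Let [a,b] ⊂ ℝ be a compact interval and let E ⊂ (a,b) be a set of Lebesgue measure zero. Suppose F : [a,b] → ℝ is differentiable at every point of [a,b] \ E with derivative f there, and suppose F has negligible variation on E, i.e., for every ε > 0 there exists a gauge δ : [a,b] → (0,∞) such that Σ_{([u,v],x) ∈ P|_E} |F(v) − F(u)| < ε for every P ∈ 𝒫_δ[a,b]|_E. Then the extended function f_ex (equal to f off E and to 0 on E) is generalized Riemann (Henstock–Kurzweil) integrable on [a,b] with integral equal to F(b) − F(a). -/

import Mathlib

open scoped Classical

/-- A tagged partition of `[a,b]`: division points `t 0 = a ≤ t 1 ≤ ⋯ ≤ t n = b`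
with a tag `tag i ∈ [t i, t (i+1)]` for each subinterval. -/
structure TaggedPartition (a b : ℝ) where
  n : ℕ
  t : ℕ → ℝ
  tag : ℕ → ℝ
  t_zero : t 0 = a
  t_last : t n = b
  mono : ∀ i < n, t i ≤ t (i + 1)
  tag_mem : ∀ i < n, tag i ∈ Set.Icc (t i) (t (i + 1))

/-- A gauge on `[a,b]` is a function that is positive on `[a,b]`. -/
def IsGauge (a b : ℝ) (δ : ℝ → ℝ) : Prop :=
  ∀ x ∈ Set.Icc a b, 0 < δ x

/-- `P` is `δ`-fine: each subinterval is contained in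
`(tag i - δ (tag i), tag i + δ (tag i))`. -/
def TaggedPartition.IsFine {a b : ℝ} (P : TaggedPartition a b) (δ : ℝ → ℝ) : Prop :=
  ∀ i < P.n, Set.Icc (P.t i) (P.t (i + 1)) ⊆
    Set.Ioo (P.tag i - δ (P.tag i)) (P.tag i + δ (P.tag i))

/-- Every subinterval of `P` that intersects `E` has its tag in `E`
(membership in the family `𝒫_δ[a,b]|_E`). -/
def TaggedPartition.TagsIn {a b : ℝ} (P : TaggedPartition a b) (E : Set ℝ) : Prop :=
  ∀ i < P.n, (Set.Icc (P.t i) (P.t (i + 1)) ∩ E).Nonempty → P.tag i ∈ E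

/-- The Riemann sum `Σ g(xᵢ)(bᵢ - aᵢ)` of `g` over `P`. -/
def TaggedPartition.riemannSum {a b : ℝ} (P : TaggedPartition a b) (g : ℝ → ℝ) : ℝ :=
  ∑ i ∈ Finset.range P.n, g (P.tag i) * (P.t (i + 1) - P.t i)

/-- The sum `Σ (F(bᵢ) - F(aᵢ))` of increments of `F` over the restriction `P|_E`,
i.e. over those pairs of `P` whose interval meets `E` and whose tag lies in `E`. -/
noncomputable def TaggedPartition.restSum {a b : ℝ} (P : TaggedPartition a b) (F : ℝ → ℝ)
    (E : Set ℝ) : ℝ :=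
  ∑ i ∈ Finset.range P.n,
    if (Set.Icc (P.t i) (P.t (i + 1)) ∩ E).Nonempty ∧ P.tag i ∈ E then
      F (P.t (i + 1)) - F (P.t i)
    else 0

/-- `F` is basically summable (BS_δ) on `E` to `R`. -/
def BasicallySummable (a b : ℝ) (F : ℝ → ℝ) (E : Set ℝ) (R : ℝ) : Prop :=
  ∀ ε > 0, ∃ δ : ℝ → ℝ, IsGauge a b δ ∧
    ∀ P : TaggedPartition a b, P.IsFine δ → P.TagsIn E → |P.restSum F E - R| < ε

/-- `g` is generalized Riemann (Henstock–Kurzweil) integrable on `[a,b]` to `I`,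
using `δ`-fine partitions in `𝒫_δ[a,b]|_E`. -/
def HKIntegrableTo (a b : ℝ) (E : Set ℝ) (g : ℝ → ℝ) (I : ℝ) : Prop :=
  ∀ ε > 0, ∃ δ : ℝ → ℝ, IsGauge a b δ ∧
    ∀ P : TaggedPartition a b, P.IsFine δ → P.TagsIn E → |P.riemannSum g - I| < ε

/-- `F` has negligible variation on `E`: for every `ε > 0` there is a gauge `δ`
such that `Σ_{P|_E} |F(bᵢ) - F(aᵢ)| < ε` for every `δ`-fine partition in
`𝒫_δ[a,b]|_E`. -/
noncomputable def NegligibleVariation (a b : ℝ) (F : ℝ → ℝ) (E : Set ℝ) : Prop :=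
  ∀ ε > 0, ∃ δ : ℝ → ℝ, IsGauge a b δ ∧
    ∀ P : TaggedPartition a b, P.IsFine δ → P.TagsIn E →
      (∑ i ∈ Finset.range P.n,
        if (Set.Icc (P.t i) (P.t (i + 1)) ∩ E).Nonempty ∧ P.tag i ∈ E then
          |F (P.t (i + 1)) - F (P.t i)|
        else 0) < ε

/-!
A pair of the partition tagged off `E` contributes an error of at most `η` times its length, because
the increment of `F` over an interval straddling the tag is approximated by `f`. A pair tagged in
`E` contributes only the increment of `F`, since the extended integrand vanishes there, and these
increments are summable to less than any `ε` by negligible variation.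
-/

theorem exists_norm_sub_sub_smul_le_of_hasDerivWithinAt {V : Type*} [NormedAddCommGroup V]
    [NormedSpace ℝ V] {F : ℝ → V} {F' : V} {s : Set ℝ} {x η : ℝ}
    (hF : HasDerivWithinAt F F' s x) (hη : 0 < η) :
    ∃ d > 0, ∀ u ∈ s, ∀ v ∈ s, x ∈ Set.Icc u v → Set.Icc u v ⊆ Set.Ioo (x - d) (x + d) →
      ‖F v - F u - (v - u) • F'‖ ≤ η * (v - u) := by
  obtain ⟨d, hd, hball⟩ :=
    Metric.mem_nhdsWithin_iff.1 ((hasDerivWithinAt_iff_isLittleO.1 hF).def hη)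
  rw [Real.ball_eq_Ioo] at hball
  refine ⟨d, hd, fun u hu v hv ⟨hux, hxv⟩ hsub ↦ ?_⟩
  have hleft : ‖F u - F x - (u - x) • F'‖ ≤ η * (x - u) := by
    simpa only [Set.mem_ofPred_eq, Real.norm_of_nonpos (sub_nonpos.2 hux), neg_sub]
      using hball ⟨hsub (Set.left_mem_Icc.2 (hux.trans hxv)), hu⟩
  have hright : ‖F v - F x - (v - x) • F'‖ ≤ η * (v - x) := by
    simpa only [Set.mem_ofPred_eq, Real.norm_of_nonneg (sub_nonneg.2 hxv)]
      using hball ⟨hsub (Set.right_mem_Icc.2 (hux.trans hxv)), hv⟩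
  calc ‖F v - F u - (v - u) • F'‖
      = ‖(F v - F x - (v - x) • F') - (F u - F x - (u - x) • F')‖ := by
        congr 1
        module
    _ ≤ η * (v - x) + η * (x - u) := norm_sub_le_of_le hright hleft
    _ = η * (v - u) := by ring

theorem IsGauge.inf {a b : ℝ} {δ₁ δ₂ : ℝ → ℝ} (h₁ : IsGauge a b δ₁) (h₂ : IsGauge a b δ₂) :
    IsGauge a b (δ₁ ⊓ δ₂) :=
  fun x hx ↦ lt_inf_iff.2 ⟨h₁ x hx, h₂ x hx⟩

namespace TaggedPartition

variable {a b : ℝ} (P : TaggedPartition a b)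

theorem IsFine.mono {P : TaggedPartition a b} {δ₁ δ₂ : ℝ → ℝ} (h : P.IsFine δ₁)
    (hδ : δ₁ ≤ δ₂) : P.IsFine δ₂ :=
  fun i hi ↦ (h i hi).trans <|
    Set.Ioo_subset_Ioo (sub_le_sub_left (hδ _) _) (add_le_add_right (hδ _) _)

theorem monotoneOn_t : MonotoneOn P.t (Set.Iic P.n) :=
  monotoneOn_of_le_succ Set.ordConnected_Iic fun i _ _ hi ↦ P.mono i hi

theorem t_mem_Icc {i : ℕ} (hi : i ≤ P.n) : P.t i ∈ Set.Icc a b :=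
  ⟨P.t_zero.ge.trans (P.monotoneOn_t (Nat.zero_le P.n) hi (Nat.zero_le i)),
    (P.monotoneOn_t hi Set.self_mem_Iic hi).trans P.t_last.le⟩

theorem tag_mem_Icc {i : ℕ} (hi : i < P.n) : P.tag i ∈ Set.Icc a b :=
  Set.Icc_subset_Icc (P.t_mem_Icc hi.le).1 (P.t_mem_Icc hi).2 (P.tag_mem i hi)

theorem sum_increments {G : Type*} [AddCommGroup G] (F : ℝ → G) :
    ∑ i ∈ Finset.range P.n, (F (P.t (i + 1)) - F (P.t i)) = F b - F a := by
  rw [Finset.sum_range_sub fun i ↦ F (P.t i), P.t_last, P.t_zero]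

/-- The sum `Σ |F(bᵢ) - F(aᵢ)|` over the restriction `P|_E`, which `NegligibleVariation` requires
to be small; the condition on the pairs is kept in the form used there. -/
noncomputable def restVariation (F : ℝ → ℝ) (E : Set ℝ) : ℝ :=
  ∑ i ∈ Finset.range P.n,
    if (Set.Icc (P.t i) (P.t (i + 1)) ∩ E).Nonempty ∧ P.tag i ∈ E then
      |F (P.t (i + 1)) - F (P.t i)|
    else 0

theorem restVariation_eq_sum_ite_tag_mem (F : ℝ → ℝ) (E : Set ℝ) :
    P.restVariation F E = ∑ i ∈ Finset.range P.n,
      if P.tag i ∈ E then |F (P.t (i + 1)) - F (P.t i)| else 0 := by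
  refine Finset.sum_congr rfl fun i hi ↦ if_congr (and_iff_right_of_imp fun htag ↦ ?_) rfl rfl
  exact ⟨P.tag i, P.tag_mem i (Finset.mem_range.1 hi), htag⟩

theorem abs_riemannSum_sub_le {E : Set ℝ} {F g : ℝ → ℝ} {η : ℝ} (hη : 0 ≤ η)
    (hgE : ∀ x ∈ E, g x = 0)
    (hg : ∀ i < P.n, P.tag i ∉ E →
      |F (P.t (i + 1)) - F (P.t i) - (P.t (i + 1) - P.t i) * g (P.tag i)|
        ≤ η * (P.t (i + 1) - P.t i)) :
    |P.riemannSum g - (F b - F a)| ≤ P.restVariation F E + η * (b - a) := by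
  have hpair : ∀ i ∈ Finset.range P.n,
      |g (P.tag i) * (P.t (i + 1) - P.t i) - (F (P.t (i + 1)) - F (P.t i))| ≤
        (if P.tag i ∈ E then |F (P.t (i + 1)) - F (P.t i)| else 0)
          + η * (P.t (i + 1) - P.t i) := by
    intro i hi
    have hi := Finset.mem_range.1 hi
    split_ifs with htag
    · rw [hgE _ htag, zero_mul, zero_sub, abs_neg]
      exact le_add_of_nonneg_right (mul_nonneg hη (sub_nonneg.2 (P.mono i hi)))
    · rw [zero_add, abs_sub_comm, mul_comm (g _)]
      exact hg i hi htag
  calc |P.riemannSum g - (F b - F a)|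
      = |∑ i ∈ Finset.range P.n,
          (g (P.tag i) * (P.t (i + 1) - P.t i) - (F (P.t (i + 1)) - F (P.t i)))| := by
        rw [Finset.sum_sub_distrib, P.sum_increments, riemannSum]
    _ ≤ ∑ i ∈ Finset.range P.n,
          ((if P.tag i ∈ E then |F (P.t (i + 1)) - F (P.t i)| else 0)
            + η * (P.t (i + 1) - P.t i)) :=
        (Finset.abs_sum_le_sum_abs _ _).trans (Finset.sum_le_sum hpair)
    _ = P.restVariation F E + η * (b - a) := by
        rw [Finset.sum_add_distrib, ← Finset.mul_sum, restVariation_eq_sum_ite_tag_mem]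
        exact congrArg (_ + η * ·) (P.sum_increments id)

end TaggedPartition

theorem exists_isGauge_norm_increment_sub_smul_le {V : Type*} [NormedAddCommGroup V]
    [NormedSpace ℝ V] {a b : ℝ} {A : Set ℝ} {F f : ℝ → V} {η : ℝ}
    (hF : ∀ x ∈ A, HasDerivWithinAt F (f x) (Set.Icc a b) x) (hη : 0 < η) :
    ∃ δ : ℝ → ℝ, IsGauge a b δ ∧ ∀ P : TaggedPartition a b, P.IsFine δ →
      ∀ i < P.n, P.tag i ∈ A →
        ‖F (P.t (i + 1)) - F (P.t i) - (P.t (i + 1) - P.t i) • f (P.tag i)‖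
          ≤ η * (P.t (i + 1) - P.t i) := by
  choose! δ hδ hstraddle using fun x hx ↦
    exists_norm_sub_sub_smul_le_of_hasDerivWithinAt (hF x hx) hη
  refine ⟨fun x ↦ if x ∈ A then δ x else 1, fun x _ ↦ ?_, fun P hP i hi htag ↦ ?_⟩
  · dsimp only
    split_ifs with hx
    exacts [hδ x hx, one_pos]
  · have hfine := hP i hi
    simp only [htag, if_true] at hfine
    exact hstraddle _ htag _ (P.t_mem_Icc hi.le) _ (P.t_mem_Icc hi) (P.tag_mem i hi) hfine

theorem statement3_general {a b : ℝ} {E : Set ℝ} {F f : ℝ → ℝ}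
    (hF : ∀ x ∈ Set.Icc a b \ E, HasDerivWithinAt F (f x) (Set.Icc a b) x)
    (hNV : NegligibleVariation a b F E) :
    HKIntegrableTo a b E (fun x => if x ∈ E then 0 else f x) (F b - F a) := by
  intro ε hε
  obtain ⟨η, hη, hηε⟩ := exists_pos_mul_lt (half_pos hε) (b - a)
  obtain ⟨δ₁, hδ₁, hvar⟩ := hNV (ε / 2) (half_pos hε)
  obtain ⟨δ₂, hδ₂, hincr⟩ := exists_isGauge_norm_increment_sub_smul_le hF hη
  refine ⟨δ₁ ⊓ δ₂, hδ₁.inf hδ₂, fun P hP htags ↦ ?_⟩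
  have hvarP : P.restVariation F E < ε / 2 := hvar P (hP.mono inf_le_left) htags
  have hsum := P.abs_riemannSum_sub_le (E := E) (F := F)
    (g := fun x ↦ if x ∈ E then 0 else f x) hη.le (fun x hx ↦ if_pos hx) fun i hi htag ↦ by
      have htagA : P.tag i ∈ Set.Icc a b \ E := ⟨P.tag_mem_Icc hi, htag⟩
      simpa only [htag, if_false, Real.norm_eq_abs, smul_eq_mul]
        using hincr P (hP.mono inf_le_right) i hi htagA
  linarith

/-- If `F` is differentiable with derivative `f` on `[a,b] \ E`,
where `E ⊂ (a,b)` has Lebesgue measure zero, and `F` has negligible variation on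
`E`, then `f_ex` is Henstock–Kurzweil integrable on `[a,b]` with integral
`F b - F a`. -/
theorem statement3 (a b : ℝ) (hab : a ≤ b) (E : Set ℝ) (hE : E ⊆ Set.Ioo a b)
    (hE0 : MeasureTheory.volume E = 0) (F f : ℝ → ℝ)
    (hF : ∀ x ∈ Set.Icc a b \ E, HasDerivWithinAt F (f x) (Set.Icc a b) x)
    (hNV : NegligibleVariation a b F E) :
    HKIntegrableTo a b E (fun x => if x ∈ E then 0 else f x) (F b - F a) :=
  statement3_general hF hNV
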